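/- Let L > 0 and D = (0,∞) × (0,L). Let u : ℝ² → ℝ be three times continuously differentiable with u(x,0) = u(x,L) = 0 for all x ≥ 0, with u_y and its first and second partial derivatives tending to 0 as x → ∞ uniformly in y, and with ∫_D u_y² dxdy, ∫_D (u_{xy}² + u_{yy}²) dxdy and ∫_D u_{xyy}² dxdy finite. Then sup_{(x,y) ∈ D} u_y(x,y)² ≤ ∫_D u_y² dxdy + ∫_D (u_{xy}² + u_{yy}²) dxdy + ∫_D u_{xyy}² dxdy. -/

import Mathlib

open MeasureTheory Real

/-- Partial derivative with respect to the first coordinate. -/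
noncomputable def pdx (u : ℝ × ℝ → ℝ) : ℝ × ℝ → ℝ :=
  fun p => deriv (fun x => u (x, p.2)) p.1

/-- Partial derivative with respect to the second coordinate. -/
noncomputable def pdy (u : ℝ × ℝ → ℝ) : ℝ × ℝ → ℝ :=
  fun p => deriv (fun y => u (p.1, y)) p.2

/-- `f` tends to `0` as `x → ∞`, uniformly in `y`. -/
def DecaysUnif (f : ℝ × ℝ → ℝ) : Prop :=
  ∀ ε > 0, ∃ M : ℝ, ∀ x ≥ M, ∀ y : ℝ, |f (x, y)| ≤ ε

/-! The inequality `|2 h h'| ≤ h² + h'²` bounds the oscillation of `h²` on an interval by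
`∫ (h² + h'²)`. Along a line of infinite length, integrability makes `h²` arbitrarily small
somewhere, so the bound applies to `h²` itself. Applied in the `x`-direction to `u_y` and to `u_yy`,
this controls `u_y² + u_yy²` on a vertical segment by integrals over horizontal lines. Along that
segment `u_y` vanishes somewhere by Rolle's theorem, and the oscillation bound in the `y`-direction
concludes. -/

section OneVariable

lemma abs_two_mul_mul_le_sq_add_sq (a b : ℝ) : |2 * a * b| ≤ a ^ 2 + b ^ 2 :=
  abs_le.2 ⟨by linarith [sq_nonneg (a + b)], two_mul_le_add_sq a b⟩

variable {S : Set ℝ} {h h' : ℝ → ℝ}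

lemma aestronglyMeasurable_of_hasDerivAt (hS : MeasurableSet S)
    (hh : ∀ t ∈ S, HasDerivAt h (h' t) t) :
    AEStronglyMeasurable h (volume.restrict S) ∧ AEStronglyMeasurable h' (volume.restrict S) := by
  have hcont : ContinuousOn h S := fun t ht => (hh t ht).continuousAt.continuousWithinAt
  have hderiv : deriv h =ᵐ[volume.restrict S] h' :=
    ae_restrict_of_forall_mem hS fun t ht => (hh t ht).deriv
  exact ⟨hcont.aestronglyMeasurable hS, (aestronglyMeasurable_deriv h _).congr hderiv⟩

lemma integrableOn_sq_add_sq_of_hasDerivAt_of_le (hS : MeasurableSet S)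
    (hh : ∀ t ∈ S, HasDerivAt h (h' t) t) {g : ℝ → ℝ} (hg : IntegrableOn g S)
    (hle : ∀ᵐ t ∂volume.restrict S, h t ^ 2 + h' t ^ 2 ≤ g t) :
    IntegrableOn (fun t => h t ^ 2 + h' t ^ 2) S := by
  obtain ⟨hm, hm'⟩ := aestronglyMeasurable_of_hasDerivAt hS hh
  refine Integrable.mono' hg ((hm.pow 2).add (hm'.pow 2)) ?_
  filter_upwards [hle] with t ht
  rwa [Real.norm_of_nonneg (by positivity)]

lemma abs_sq_sub_sq_le_setIntegral [S.OrdConnected] (hh : ∀ t ∈ S, HasDerivAt h (h' t) t)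
    (hi : IntegrableOn (fun t => h t ^ 2 + h' t ^ 2) S) {a b : ℝ} (ha : a ∈ S) (hb : b ∈ S) :
    |h b ^ 2 - h a ^ 2| ≤ ∫ t in S, (h t ^ 2 + h' t ^ 2) := by
  have hS : MeasurableSet S := Set.OrdConnected.measurableSet ‹_›
  have hsub : Set.uIcc a b ⊆ S := Set.OrdConnected.uIcc_subset ‹_› ha hb
  have hsub' : Set.uIoc a b ⊆ S := Set.uIoc_subset_uIcc.trans hsub
  have hprod : IntegrableOn (fun t => 2 * h t * h' t) S := by
    obtain ⟨hm, hm'⟩ := aestronglyMeasurable_of_hasDerivAt hS hh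
    exact Integrable.mono' hi ((hm.const_mul 2).mul hm')
      (.of_forall fun t => abs_two_mul_mul_le_sq_add_sq (h t) (h' t))
  have hftc : ∫ t in a..b, 2 * h t * h' t = h b ^ 2 - h a ^ 2 :=
    intervalIntegral.integral_eq_sub_of_hasDerivAt (f := fun t => h t ^ 2)
      (fun t ht => by simpa using (hh t (hsub ht)).fun_pow 2)
      (intervalIntegrable_iff.2 (hprod.mono_set hsub'))
  calc |h b ^ 2 - h a ^ 2| = ‖∫ t in a..b, 2 * h t * h' t‖ := by rw [hftc, Real.norm_eq_abs]
    _ ≤ ∫ t in Set.uIoc a b, ‖2 * h t * h' t‖ :=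
      intervalIntegral.norm_integral_le_integral_norm_uIoc
    _ ≤ ∫ t in Set.uIoc a b, (h t ^ 2 + h' t ^ 2) :=
      integral_mono (hprod.mono_set hsub').norm (hi.mono_set hsub')
        fun t => abs_two_mul_mul_le_sq_add_sq (h t) (h' t)
    _ ≤ ∫ t in S, (h t ^ 2 + h' t ^ 2) :=
      setIntegral_mono_set hi (.of_forall fun t => by positivity) hsub'.eventuallyLE

lemma exists_mem_lt_of_integrableOn {α : Type*} [MeasurableSpace α] {μ : Measure α} {s : Set α}
    (hs : μ s = ⊤) {f : α → ℝ} (hf : IntegrableOn f s μ) {ε : ℝ} (hε : 0 < ε) :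
    ∃ t ∈ s, f t < ε := by
  by_contra! hge
  have hfin : μ.restrict s {t | ε ≤ f t} < ⊤ := Integrable.measure_ge_lt_top hf hε
  have hle : μ s ≤ μ.restrict s {t | ε ≤ f t} :=
    (Measure.restrict_apply_self μ s).ge.trans (measure_mono hge)
  exact (hs ▸ hle).not_gt hfin

lemma sq_le_setIntegral_of_volume_eq_top [S.OrdConnected] (hS : volume S = ⊤)
    (hh : ∀ t ∈ S, HasDerivAt h (h' t) t)
    (hi : IntegrableOn (fun t => h t ^ 2 + h' t ^ 2) S) {a : ℝ} (ha : a ∈ S) :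
    h a ^ 2 ≤ ∫ t in S, (h t ^ 2 + h' t ^ 2) := by
  refine le_of_forall_pos_le_add fun ε hε => ?_
  obtain ⟨b, hb, hbε⟩ := exists_mem_lt_of_integrableOn hS hi hε
  have hosc := (abs_le.1 (abs_sq_sub_sq_le_setIntegral hh hi hb ha)).2
  linarith [sq_nonneg (h' b)]

end OneVariable

section PartialDerivatives

variable {u : ℝ × ℝ → ℝ}

lemma hasDerivAt_pdx {x y : ℝ} (hu : DifferentiableAt ℝ u (x, y)) :
    HasDerivAt (fun s => u (s, y)) (pdx u (x, y)) x :=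
  (hu.comp x (by fun_prop : DifferentiableAt ℝ (fun s : ℝ => (s, y)) x)).hasDerivAt

lemma hasDerivAt_pdy {x y : ℝ} (hu : DifferentiableAt ℝ u (x, y)) :
    HasDerivAt (fun t => u (x, t)) (pdy u (x, y)) y :=
  (hu.comp y (by fun_prop : DifferentiableAt ℝ (fun t : ℝ => (x, t)) y)).hasDerivAt

lemma pdy_eq_fderiv (hu : Differentiable ℝ u) : pdy u = fun p => fderiv ℝ u p (0, 1) := by
  funext ⟨x, y⟩
  have hline : HasDerivAt (fun t : ℝ => (x, t)) (0, 1) y :=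
    (hasDerivAt_const y x).prodMk (hasDerivAt_id y)
  exact ((hu (x, y)).hasFDerivAt.comp_hasDerivAt y hline).deriv

lemma contDiff_pdy {m n : WithTop ℕ∞} (hu : ContDiff ℝ n u) (hmn : m + 1 ≤ n) :
    ContDiff ℝ m (pdy u) := by
  have hn : n ≠ 0 := fun h0 => by simp [h0] at hmn
  rw [pdy_eq_fderiv (hu.differentiable hn)]
  exact (hu.fderiv_right hmn).clm_apply contDiff_const

end PartialDerivatives

section Product

/-- The density `v² + |∇v|² + v_{xy}²`, whose integral controls `sup v²`. The mixed derivative is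
taken first in `y` and then in `x`. -/
noncomputable def mixedEnergyDensity (v : ℝ × ℝ → ℝ) (p : ℝ × ℝ) : ℝ :=
  v p ^ 2 + (pdx v p ^ 2 + pdy v p ^ 2) + pdx (pdy v) p ^ 2

variable {X Y : Set ℝ} [X.OrdConnected] {v : ℝ × ℝ → ℝ}

lemma sq_add_sq_pdy_le_setIntegral_mixedEnergyDensity (hX : volume X = ⊤) {y : ℝ}
    (hv : ∀ s ∈ X, DifferentiableAt ℝ v (s, y))
    (hvy : ∀ s ∈ X, DifferentiableAt ℝ (pdy v) (s, y))
    (hi : IntegrableOn (fun s => mixedEnergyDensity v (s, y)) X) {x : ℝ} (hx : x ∈ X) :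
    v (x, y) ^ 2 + pdy v (x, y) ^ 2 ≤ ∫ s in X, mixedEnergyDensity v (s, y) := by
  have hmeas : MeasurableSet X := Set.OrdConnected.measurableSet ‹_›
  have hdv := fun s hs => hasDerivAt_pdx (hv s hs)
  have hdvy := fun s hs => hasDerivAt_pdx (hvy s hs)
  have hiv := integrableOn_sq_add_sq_of_hasDerivAt_of_le hmeas hdv hi <| .of_forall fun s => by
    simp only [mixedEnergyDensity]
    linarith [sq_nonneg (pdy v (s, y)), sq_nonneg (pdx (pdy v) (s, y))]
  have hivy := integrableOn_sq_add_sq_of_hasDerivAt_of_le hmeas hdvy hi <| .of_forall fun s => by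
    simp only [mixedEnergyDensity]
    linarith [sq_nonneg (v (s, y)), sq_nonneg (pdx v (s, y))]
  calc v (x, y) ^ 2 + pdy v (x, y) ^ 2
      ≤ (∫ s in X, (v (s, y) ^ 2 + pdx v (s, y) ^ 2)) +
          ∫ s in X, (pdy v (s, y) ^ 2 + pdx (pdy v) (s, y) ^ 2) :=
        add_le_add (sq_le_setIntegral_of_volume_eq_top hX hdv hiv hx)
          (sq_le_setIntegral_of_volume_eq_top hX hdvy hivy hx)
    _ = ∫ s in X, mixedEnergyDensity v (s, y) := by
        rw [← integral_add hiv hivy]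
        congr 1 with s
        simp only [mixedEnergyDensity]
        ring

theorem sq_le_setIntegral_mixedEnergyDensity [Y.OrdConnected] (hX : volume X = ⊤)
    (hv : ∀ p ∈ X ×ˢ Y, DifferentiableAt ℝ v p)
    (hvy : ∀ p ∈ X ×ˢ Y, DifferentiableAt ℝ (pdy v) p)
    (hi : IntegrableOn (mixedEnergyDensity v) (X ×ˢ Y)) {x y z : ℝ}
    (hx : x ∈ X) (hy : y ∈ Y) (hz : z ∈ Y) (hvz : v (x, z) = 0) :
    v (x, y) ^ 2 ≤ ∫ p in X ×ˢ Y, mixedEnergyDensity v p := by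
  have hmeas : MeasurableSet Y := Set.OrdConnected.measurableSet ‹_›
  rw [IntegrableOn, Measure.volume_eq_prod, ← Measure.prod_restrict] at hi
  have hslice : ∀ᵐ t ∂volume.restrict Y,
      v (x, t) ^ 2 + pdy v (x, t) ^ 2 ≤ ∫ s in X, mixedEnergyDensity v (s, t) := by
    filter_upwards [hi.prod_left_ae, ae_restrict_mem hmeas] with t hit ht
    exact sq_add_sq_pdy_le_setIntegral_mixedEnergyDensity hX (fun s hs => hv _ ⟨hs, ht⟩)
      (fun s hs => hvy _ ⟨hs, ht⟩) hit hx
  have hdv : ∀ t ∈ Y, HasDerivAt (fun t => v (x, t)) (pdy v (x, t)) t :=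
    fun t ht => hasDerivAt_pdy (hv _ ⟨hx, ht⟩)
  have hiY := integrableOn_sq_add_sq_of_hasDerivAt_of_le hmeas hdv hi.integral_prod_right hslice
  calc v (x, y) ^ 2 ≤ |v (x, y) ^ 2 - v (x, z) ^ 2| := by simp [hvz]
    _ ≤ ∫ t in Y, (v (x, t) ^ 2 + pdy v (x, t) ^ 2) := abs_sq_sub_sq_le_setIntegral hdv hiY hz hy
    _ ≤ ∫ t in Y, ∫ s in X, mixedEnergyDensity v (s, t) :=
      integral_mono_ae hiY hi.integral_prod_right hslice
    _ = ∫ p in X ×ˢ Y, mixedEnergyDensity v p := by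
      rw [Measure.volume_eq_prod, ← Measure.prod_restrict, integral_prod_symm _ hi]

end Product

theorem sup_square_y_deriv_halfstrip_general {X : Set ℝ} [X.OrdConnected] (hX : volume X = ⊤)
    {a b : ℝ} {u : ℝ × ℝ → ℝ}
    (hu : ∀ x ∈ X, ContinuousOn (fun y => u (x, y)) (Set.Icc a b))
    (hv : ∀ p ∈ X ×ˢ Set.Ioo a b, DifferentiableAt ℝ (pdy u) p)
    (hvy : ∀ p ∈ X ×ˢ Set.Ioo a b, DifferentiableAt ℝ (pdy (pdy u)) p)
    (hbc : ∀ x ∈ X, u (x, a) = u (x, b))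
    (hi1 : IntegrableOn (fun p => (pdy u p) ^ 2) (X ×ˢ Set.Ioo a b))
    (hi2 : IntegrableOn (fun p => (pdx (pdy u) p) ^ 2 + (pdy (pdy u) p) ^ 2) (X ×ˢ Set.Ioo a b))
    (hi3 : IntegrableOn (fun p => (pdx (pdy (pdy u)) p) ^ 2) (X ×ˢ Set.Ioo a b)) :
    ∀ p ∈ X ×ˢ Set.Ioo a b,
      (pdy u p) ^ 2 ≤
        (∫ q in X ×ˢ Set.Ioo a b, (pdy u q) ^ 2) +
          (∫ q in X ×ˢ Set.Ioo a b, ((pdx (pdy u) q) ^ 2 + (pdy (pdy u) q) ^ 2)) +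
            ∫ q in X ×ˢ Set.Ioo a b, (pdx (pdy (pdy u)) q) ^ 2 := by
  rintro ⟨x, y⟩ ⟨hx, hy⟩
  obtain ⟨z, hz, hvz⟩ : ∃ z ∈ Set.Ioo a b, pdy u (x, z) = 0 :=
    exists_deriv_eq_zero (hy.1.trans hy.2) (hu x hx) (hbc x hx)
  have hi12 : IntegrableOn (fun p => pdy u p ^ 2 + (pdx (pdy u) p ^ 2 + pdy (pdy u) p ^ 2))
      (X ×ˢ Set.Ioo a b) := hi1.add hi2
  rw [← integral_add hi1 hi2, ← integral_add hi12 hi3]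
  exact sq_le_setIntegral_mixedEnergyDensity hX hv hvy (hi12.add hi3) hx hy hz hvz

/-- Sup-norm bound on the half-strip `D = (0,∞) × (0,L)` for the `y`-derivative
(third inequality of Proposition 3.3):
`sup_D u_y² ≤ ‖u_y‖² + ‖∇u_y‖² + ‖u_{xyy}‖²`. -/
theorem sup_square_y_deriv_halfstrip (L : ℝ) (hL : 0 < L)
    (D : Set (ℝ × ℝ)) (hD : D = Set.Ioi (0:ℝ) ×ˢ Set.Ioo 0 L)
    (u : ℝ × ℝ → ℝ) (hu : ContDiff ℝ 3 u)
    (hbc : ∀ x ≥ (0:ℝ), u (x, 0) = 0 ∧ u (x, L) = 0)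
    (hdec : DecaysUnif (pdy u) ∧ DecaysUnif (pdx (pdy u)) ∧ DecaysUnif (pdy (pdy u)) ∧
      DecaysUnif (pdx (pdx (pdy u))) ∧ DecaysUnif (pdx (pdy (pdy u))) ∧
        DecaysUnif (pdy (pdy (pdy u))))
    (hi1 : IntegrableOn (fun p => (pdy u p) ^ 2) D)
    (hi2 : IntegrableOn (fun p => (pdx (pdy u) p) ^ 2 + (pdy (pdy u) p) ^ 2) D)
    (hi3 : IntegrableOn (fun p => (pdx (pdy (pdy u)) p) ^ 2) D) :
    ∀ p ∈ D,
      (pdy u p) ^ 2 ≤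
        (∫ q in D, (pdy u q) ^ 2) +
          (∫ q in D, ((pdx (pdy u) q) ^ 2 + (pdy (pdy u) q) ^ 2)) +
            ∫ q in D, (pdx (pdy (pdy u)) q) ^ 2 := by
  subst hD
  have hv : ContDiff ℝ 2 (pdy u) := contDiff_pdy hu (by norm_num)
  have hvy : ContDiff ℝ 1 (pdy (pdy u)) := contDiff_pdy hv (by norm_num)
  exact sup_square_y_deriv_halfstrip_general Real.volume_Ioi
    (fun x _ => (hu.continuous.comp (by fun_prop)).continuousOn)
    (fun p _ => hv.differentiable (by norm_num) p)
    (fun p _ => hvy.differentiable (by norm_num) p)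
    (fun x hx => (hbc x hx.le).1.trans (hbc x hx.le).2.symm) hi1 hi2 hi3
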